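/- arXiv:2507.09803 — 2 statements merged into one kernel-verified Lean document; each statement's English description precedes it below -/
import Mathlib

section
/- Let p₁, α₁, ξ₁₀ ∈ ℂ with p₁ ≠ 0 and p₁ + conj(p₁) ≠ 0, and let a ∈ ℝ, a ≠ 0, with 1 − a·p₁ ≠ 0 and 1 + a·conj(p₁) ≠ 0. Set ξ₁(t) = −t/p₁ + ξ₁₀, ξ₁*(t) = −t/conj(p₁) + conj(ξ₁₀), f_k(t) = 1 + (i·p₁·α₁·conj(α₁)/(p₁+conj(p₁))²)·((1−a·p₁)/(1+a·conj(p₁)))^{−k}·exp(ξ₁+ξ₁*), f̃_k(t) = 1 − (i·conj(p₁)·α₁·conj(α₁)/(p₁+conj(p₁))²)·((1−a·p₁)/(1+a·conj(p₁)))^{−k}·exp(ξ₁+ξ₁*), g_k(t) = (i·conj(α₁)/p₁)·(1−a·p₁)^{−k}·exp(ξ₁), g̃_k(t) = −(i·α₁/conj(p₁))·(1+a·conj(p₁))^{k}·exp(ξ₁*), h_k(t) = conj(α₁)·(1−a·p₁)^{−k}·exp(ξ₁), h̃_k(t) = α₁·(1+a·conj(p₁))^{k}·exp(ξ₁*), and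 define u_k = g_k/f̃_k, v_k = h_k/f_k, ũ_k = g̃_k/f_k, ṽ_k = h̃_k/f̃_k. Then for every k ∈ ℤ and t ∈ ℝ at which f_k(t), f̃_k(t), f_{k+1}(t), f̃_{k+1}(t) are all nonzero: (i/a)(u_{k+1}(t) − u_k(t)) + v_{k+1}(t) + u_{k+1}(t) v_{k+1}(t) ṽ_k(t) = 0 and i·(d/dt)v_k(t) + u_k(t) + v_k(t) u_k(t) ũ_k(t) = 0. -/
theorem aux_disc (I p q al be a X Y : ℂ) (hI : I ^ 2 = -1) (hp : p ≠ 0) (hps : p + q ≠ 0) (ha : a ≠ 0)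
    (h1 : 1 - a * p ≠ 0)
    (F F' G : ℂ) (hF : F = 1 - I * q * al * be / (p + q) ^ 2 * (X * Y))
    (hF' : F' = 1 - I * q * al * be / (p + q) ^ 2 * (X * Y * ((1 + a * q) / (1 - a * p))))
    (hG : G = 1 + I * p * al * be / (p + q) ^ 2 * (X * Y * ((1 + a * q) / (1 - a * p))))
    (nF : F ≠ 0) (nF' : F' ≠ 0) (nG : G ≠ 0) :
    I / a * (I * be / p * (X / (1 - a * p)) / F' - I * be / p * X / F)
      + be * (X / (1 - a * p)) / G
      + I * be / p * (X / (1 - a * p)) / F' * (be * (X / (1 - a * p)) / G) * (al * Y / F) = 0 := by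
  have key : -(G * (F - (1 - a * p) * F')) * (1 - a * p) + a * p * (1 - a * p) * F' * F
      + a * I * al * be * X * Y = 0 := by
    subst hF hF' hG
    clear nF nF' nG
    generalize hA : 1 - a * p = A at *
    field_simp
    subst hA
    ring
  have : I / a * (I * be / p * (X / (1 - a * p)) / F' - I * be / p * X / F)
      + be * (X / (1 - a * p)) / G
      + I * be / p * (X / (1 - a * p)) / F' * (be * (X / (1 - a * p)) / G) * (al * Y / F)
      = be * X / (a * p * (1 - a * p) ^ 2 * F * F' * G) *
        (I ^ 2 * (G * (F - (1 - a * p) * F')) * (1 - a * p) + a * p * (1 - a * p) * F' * F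
      + a * I * al * be * X * Y) := by
    generalize hA : 1 - a * p = A at *
    field_simp
  rw [this, hI, neg_one_mul, key, mul_zero]

theorem aux_cont (I p q al be X Y : ℂ) (hI : I ^ 2 = -1) (hp : p ≠ 0) (hq : q ≠ 0) (hps : p + q ≠ 0)
    (F G : ℂ) (hF : F = 1 - I * q * al * be / (p + q) ^ 2 * (X * Y))
    (hG : G = 1 + I * p * al * be / (p + q) ^ 2 * (X * Y))
    (nF : F ≠ 0) (nG : G ≠ 0) :
    I * ((be * (X * (-1 / p)) * G - be * X * (I * p * al * be / (p + q) ^ 2 *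
        (X * Y * (-1 / p + -1 / q)))) / G ^ 2) + I * be / p * X / F
      + be * X / G * (I * be / p * X / F) * (-(I * al / q) * Y / G) = 0 := by
  have key : F * ((-1 / p) * G + I * p * al * be / (p + q) ^ 2 * (X * Y * (1 / p + 1 / q)))
      + 1 / p * G ^ 2 - I * al * be * X * Y / (p * q) = 0 := by
    subst hF hG
    field_simp
    ring
  have : I * ((be * (X * (-1 / p)) * G - be * X * (I * p * al * be / (p + q) ^ 2 *
        (X * Y * (-1 / p + -1 / q)))) / G ^ 2) + I * be / p * X / F
      + be * X / G * (I * be / p * X / F) * (-(I * al / q) * Y / G)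
      = I * be * X / (F * G ^ 2) *
      (F * ((-1 / p) * G + I * p * al * be / (p + q) ^ 2 * (X * Y * (1 / p + 1 / q)))
      + 1 / p * G ^ 2 - I * al * be * X * Y / (p * q)) := by
    generalize p + q = s at *
    field_simp
    ring
  rw [this, key, mul_zero]

/-- The one-soliton formulas solve the semi-discrete massive Thirring model. -/
theorem semi_discrete_MT_one_soliton
    (p₁ α₁ ξ₁₀ : ℂ) (hp : p₁ ≠ 0) (hps : p₁ + starRingEnd ℂ p₁ ≠ 0)
    (a : ℝ) (ha : a ≠ 0)
    (h1 : 1 - (a : ℂ) * p₁ ≠ 0) (h2 : 1 + (a : ℂ) * starRingEnd ℂ p₁ ≠ 0)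
    (ξ ξs : ℝ → ℂ)
    (hξ : ∀ t : ℝ, ξ t = -(t : ℂ) / p₁ + ξ₁₀)
    (hξs : ∀ t : ℝ, ξs t = -(t : ℂ) / starRingEnd ℂ p₁ + starRingEnd ℂ ξ₁₀)
    (f ft g gt h ht : ℤ → ℝ → ℂ)
    (hf : ∀ (k : ℤ) (t : ℝ), f k t =
      1 + (Complex.I * p₁ * α₁ * starRingEnd ℂ α₁ / (p₁ + starRingEnd ℂ p₁) ^ 2) *
        ((1 - (a : ℂ) * p₁) / (1 + (a : ℂ) * starRingEnd ℂ p₁)) ^ (-k) *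
        Complex.exp (ξ t + ξs t))
    (hft : ∀ (k : ℤ) (t : ℝ), ft k t =
      1 - (Complex.I * starRingEnd ℂ p₁ * α₁ * starRingEnd ℂ α₁ /
          (p₁ + starRingEnd ℂ p₁) ^ 2) *
        ((1 - (a : ℂ) * p₁) / (1 + (a : ℂ) * starRingEnd ℂ p₁)) ^ (-k) *
        Complex.exp (ξ t + ξs t))
    (hg : ∀ (k : ℤ) (t : ℝ), g k t =
      (Complex.I * starRingEnd ℂ α₁ / p₁) * (1 - (a : ℂ) * p₁) ^ (-k) * Complex.exp (ξ t))
    (hgt : ∀ (k : ℤ) (t : ℝ), gt k t =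
      -(Complex.I * α₁ / starRingEnd ℂ p₁) * (1 + (a : ℂ) * starRingEnd ℂ p₁) ^ k *
        Complex.exp (ξs t))
    (hh : ∀ (k : ℤ) (t : ℝ), h k t =
      starRingEnd ℂ α₁ * (1 - (a : ℂ) * p₁) ^ (-k) * Complex.exp (ξ t))
    (hht : ∀ (k : ℤ) (t : ℝ), ht k t =
      α₁ * (1 + (a : ℂ) * starRingEnd ℂ p₁) ^ k * Complex.exp (ξs t))
    (u v ut vt : ℤ → ℝ → ℂ)
    (hu : ∀ k t, u k t = g k t / ft k t)
    (hv : ∀ k t, v k t = h k t / f k t)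
    (hut : ∀ k t, ut k t = gt k t / f k t)
    (hvt : ∀ k t, vt k t = ht k t / ft k t) :
    ∀ (k : ℤ) (t : ℝ), f k t ≠ 0 → ft k t ≠ 0 → f (k + 1) t ≠ 0 → ft (k + 1) t ≠ 0 →
      (Complex.I / (a : ℂ)) * (u (k + 1) t - u k t) + v (k + 1) t
        + u (k + 1) t * v (k + 1) t * vt k t = 0 ∧
      Complex.I * deriv (v k) t + u k t + v k t * u k t * ut k t = 0 := by
  have hq : starRingEnd ℂ p₁ ≠ 0 := by simpa using hp
  have hac : (a : ℂ) ≠ 0 := by exact_mod_cast ha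
  have hI : Complex.I ^ 2 = -1 := Complex.I_sq
  generalize starRingEnd ℂ p₁ = q at *
  generalize starRingEnd ℂ α₁ = be at *
  generalize starRingEnd ℂ ξ₁₀ = x0 at *
  intro k t n1 n2 n3 n4
  have hZ : ∀ (k : ℤ) (t : ℝ), ((1 - (a : ℂ) * p₁) / (1 + (a : ℂ) * q)) ^ (-k) *
      Complex.exp (ξ t + ξs t) = ((1 - (a : ℂ) * p₁) ^ (-k) * Complex.exp (ξ t)) *
        ((1 + (a : ℂ) * q) ^ k * Complex.exp (ξs t)) := by
    intro k t
    rw [Complex.exp_add, div_zpow, zpow_neg (1 + (a : ℂ) * q), div_inv_eq_mul]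
    ring
  have hX1 : (1 - (a : ℂ) * p₁) ^ (-(k + 1)) = (1 - (a : ℂ) * p₁) ^ (-k) / (1 - (a : ℂ) * p₁) := by
    rw [neg_add, zpow_add₀ h1, zpow_neg_one]; rfl
  have hY1 : (1 + (a : ℂ) * q) ^ (k + 1) = (1 + (a : ℂ) * q) ^ k * (1 + (a : ℂ) * q) := by
    rw [zpow_add_one₀ h2]
  have dξ : ∀ t, HasDerivAt ξ (-1 / p₁) t := by
    intro t
    rw [show ξ = fun t : ℝ => -(t : ℂ) / p₁ + ξ₁₀ from funext hξ]
    exact (((Complex.ofRealCLM.hasDerivAt (x := t)).neg).div_const p₁).add_const ξ₁₀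
  have dξs : ∀ t, HasDerivAt ξs (-1 / q) t := by
    intro t
    rw [show ξs = fun t : ℝ => -(t : ℂ) / q + x0 from funext hξs]
    exact (((Complex.ofRealCLM.hasDerivAt (x := t)).neg).div_const q).add_const x0
  constructor
  · have := aux_disc Complex.I p₁ q α₁ be a ((1 - (a : ℂ) * p₁) ^ (-k) * Complex.exp (ξ t))
      ((1 + (a : ℂ) * q) ^ k * Complex.exp (ξs t)) hI hp hps hac h1 (ft k t) (ft (k+1) t)
      (f (k+1) t) (by rw [hft, mul_assoc _ (_ ^ (-k)), hZ])
      (by rw [hft, mul_assoc _ (_ ^ (-(k+1))), hZ, hX1, hY1]; ring)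
      (by rw [hf, mul_assoc _ (_ ^ (-(k+1))), hZ, hX1, hY1]; ring) n2 n4 n3
    rw [← this, hu, hu, hv, hvt, hg, hg, hh, hht, hX1]
    ring
  · have dX : HasDerivAt (h k)
        (be * (((1 - (a : ℂ) * p₁) ^ (-k) * Complex.exp (ξ t)) * (-1 / p₁))) t := by
      rw [show h k = fun t => _ from funext (hh k)]
      exact ((dξ t).cexp.const_mul (be * (1 - (a : ℂ) * p₁) ^ (-k))).congr_deriv (by ring)
    have dF : HasDerivAt (f k) (Complex.I * p₁ * α₁ * be / (p₁ + q) ^ 2 *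
        (((1 - (a : ℂ) * p₁) ^ (-k) * Complex.exp (ξ t)) *
        ((1 + (a : ℂ) * q) ^ k * Complex.exp (ξs t)) * (-1 / p₁ + -1 / q))) t := by
      rw [← hZ, show f k = fun t => _ from funext (hf k)]
      refine (((((dξ t).add (dξs t)).cexp).const_mul
        ((Complex.I * p₁ * α₁ * be / (p₁ + q) ^ 2) *
        ((1 - (a : ℂ) * p₁) / (1 + (a : ℂ) * q)) ^ (-k))).const_add 1).congr_deriv ?_
      simp only [Pi.add_apply]
      ring
    have dv := (dX.div dF n1).deriv
    rw [show h k / f k = v k from (funext (hv k)).symm] at dv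
    have := aux_cont Complex.I p₁ q α₁ be ((1 - (a : ℂ) * p₁) ^ (-k) * Complex.exp (ξ t))
      ((1 + (a : ℂ) * q) ^ k * Complex.exp (ξs t)) hI hp hq hps (ft k t)
      (f k t) (by rw [hft, mul_assoc _ (_ ^ (-k)), hZ])
      (by rw [hf, mul_assoc _ (_ ^ (-k)), hZ]) n2 n1
    rw [← this, dv, hu, hv, hut, hg, hh, hgt]
    ring
end

section
/- Let N ≥ 1, let p_1,…,p_N, p̄_1,…,p̄_N, q_1,…,q_N, q̄_1,…,q̄_N ∈ ℂ be nonzero with p_i + p̄_j ≠ 0 and q_i + q̄_j ≠ 0 for all i,j, let μ, ν, ξ_{i0}, ξ̄_{j0}, η_{i0}, η̄_{j0} ∈ ℂ, let a₁, a₂ ∈ ℝ be nonzero with 1 − a₁ p_i ≠ 0, 1 + a₁ p̄_j ≠ 0, 1 − a₂ q_i ≠ 0, 1 + a₂ q̄_j ≠ 0 for all i,j, and let x₋₁, y₋₁ ∈ ℝ. Set ξ_i = x₋₁/p_i + ξ_{i0}, ξ̄_j = x₋₁/p̄_j + ξ̄_{j0}, η_i = y₋₁/q_i + η_{i0}, η̄_j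 = y₋₁/q̄_j + η̄_{j0}. For n, k₁, m, k₂ ∈ ℤ define: A(n,k₁) the N×N matrix with entry a_{ij} = (μ p̄_j/(p_i+p̄_j))·(−p_i/p̄_j)^n·((1−a₁p_i)/(1+a₁p̄_j))^{−k₁}·exp(ξ_i+ξ̄_j); B(m,k₂) with entry b_{ij} = (ν/(q_i+q̄_j))·(−q_i/q̄_j)^m·((1−a₂q_i)/(1+a₂q̄_j))^{−k₂}·exp(η_i+η̄_j); the row vector Φ(n,k₁) with j-th entry p_j^n (1−a₁p_j)^{−k₁} exp(ξ_j); the row vector Ψ̄(m,k₂) with j-th entry (−q̄_j)^{−m}(1+a₂q̄_j)^{k₂} exp(η̄_j). Set f^{m,k₂}_{n,k₁} = det[[A(n,k₁), I],[−I, B(m,k₂)]] and g^{m,k₂}_{n,k₁} = det[[A(n,k₁), I, Φ(n,k₁)ᵀ],[−I, B(m,k₂), 0],[0, −Ψ̄(m,k₂), 0]]. Then for all n, k₁, m, k₂ ∈ ℤ: (1/a₁)·(g^{m+1,k₂}_{n,k₁+1}·f^{m,k₂}_{n+1,k₁} − g^{m+1,k₂}_{n,k₁}·f^{m,k₂}_{n+1,k₁+1})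 = g^{m+1,k₂}_{n+1,k₁+1}·f^{m,k₂}_{n,k₁}. -/
open Matrix

/-- Determinant of the 2N×2N block matrix `[[A, I], [−I, B]]`. -/
noncomputable def blockDet {N : ℕ} (A B : Matrix (Fin N) (Fin N) ℂ) : ℂ :=
  (Matrix.fromBlocks A (1 : Matrix (Fin N) (Fin N) ℂ)
    (-1 : Matrix (Fin N) (Fin N) ℂ) B).det

/-- Determinant of the bordered (2N+1)×(2N+1) matrix obtained from the block matrix
`[[A, I], [−I, B]]` by appending the column vector `col` on the right and the row
vector `row` at the bottom, with `0` in the corner. -/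
noncomputable def borderedDet {N : ℕ} (A B : Matrix (Fin N) (Fin N) ℂ)
    (col row : (Fin N ⊕ Fin N) → ℂ) : ℂ :=
  (Matrix.fromBlocks
    (Matrix.fromBlocks A (1 : Matrix (Fin N) (Fin N) ℂ)
      (-1 : Matrix (Fin N) (Fin N) ℂ) B)
    (Matrix.of fun i (_ : Fin 1) => col i)
    (Matrix.of fun (_ : Fin 1) j => row j)
    (0 : Matrix (Fin 1) (Fin 1) ℂ)).det


section helpers

variable {ι : Type*} [Fintype ι] [DecidableEq ι]

/-- Generic bordered determinant. -/
noncomputable def bdet (M : Matrix ι ι ℂ) (c r : ι → ℂ) : ℂ :=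
  (Matrix.fromBlocks M (Matrix.of fun i (_ : Fin 1) => c i)
    (Matrix.of fun (_ : Fin 1) j => r j) (0 : Matrix (Fin 1) (Fin 1) ℂ)).det

lemma bdet_col (M : Matrix ι ι ℂ) (c r v : ι → ℂ) :
    bdet (M + vecMulVec c v) c r = bdet M c r := by
  unfold bdet
  have h : Matrix.fromBlocks (M + vecMulVec c v) (Matrix.of fun i (_ : Fin 1) => c i)
      (Matrix.of fun (_ : Fin 1) j => r j) (0 : Matrix (Fin 1) (Fin 1) ℂ)
      = Matrix.fromBlocks M (Matrix.of fun i (_ : Fin 1) => c i)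
        (Matrix.of fun (_ : Fin 1) j => r j) (0 : Matrix (Fin 1) (Fin 1) ℂ) *
        Matrix.fromBlocks 1 0 (Matrix.of fun (_ : Fin 1) j => v j) 1 := by
    rw [Matrix.fromBlocks_multiply]
    congr 1
    · ext i j; simp [Matrix.mul_apply, vecMulVec_apply]
    · simp
    · simp
    · simp
  rw [h, Matrix.det_mul, Matrix.det_fromBlocks_zero₁₂]
  simp

lemma bdet_row (M : Matrix ι ι ℂ) (c r e : ι → ℂ) :
    bdet (M + vecMulVec e r) c r = bdet M c r := by
  unfold bdet
  have h : Matrix.fromBlocks (M + vecMulVec e r) (Matrix.of fun i (_ : Fin 1) => c i)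
      (Matrix.of fun (_ : Fin 1) j => r j) (0 : Matrix (Fin 1) (Fin 1) ℂ)
      = Matrix.fromBlocks 1 (Matrix.of fun i (_ : Fin 1) => e i) 0 1 *
        Matrix.fromBlocks M (Matrix.of fun i (_ : Fin 1) => c i)
        (Matrix.of fun (_ : Fin 1) j => r j) (0 : Matrix (Fin 1) (Fin 1) ℂ) := by
    rw [Matrix.fromBlocks_multiply]
    congr 1
    · ext i j; simp [Matrix.mul_apply, vecMulVec_apply]
    · simp
    · simp
    · simp
  rw [h, Matrix.det_mul, Matrix.det_fromBlocks_zero₂₁]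
  simp

lemma bdet_unit (M : Matrix ι ι ℂ) (hM : M.det ≠ 0) (c r : ι → ℂ) :
    bdet M c r = - (M.det * (r ⬝ᵥ (M⁻¹ *ᵥ c))) := by
  unfold bdet
  have hu : IsUnit M := (Matrix.isUnit_iff_isUnit_det M).2 (isUnit_iff_ne_zero.2 hM)
  let _ := hu.invertible
  rw [Matrix.det_fromBlocks₁₁, Matrix.det_fin_one, Matrix.mul_assoc, Matrix.invOf_eq_nonsing_inv]
  simp [Matrix.mul_apply, dotProduct, mulVec]

lemma det_rank_one (M : Matrix ι ι ℂ) (hM : M.det ≠ 0) (u v : ι → ℂ) :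
    (M - vecMulVec u v).det = M.det * (1 - v ⬝ᵥ (M⁻¹ *ᵥ u)) := by
  have h := Matrix.det_add_mul (replicateCol (Fin 1) (-u))
    (replicateRow (Fin 1) v) (isUnit_iff_ne_zero.2 hM)
  have e : M + replicateCol (Fin 1) (-u) * replicateRow (Fin 1) v = M - vecMulVec u v := by
    ext i j; simp [Matrix.mul_apply, vecMulVec_apply, sub_eq_add_neg]
  rw [e] at h
  rw [h, Matrix.det_fin_one, Matrix.mul_assoc]
  simp [Matrix.mul_apply, dotProduct, mulVec, sub_eq_add_neg]

lemma core_generic (M : Matrix ι ι ℂ) (u s v r : ι → ℂ) (a : ℂ)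
    (hM : M.det ≠ 0) (hM2 : (M - vecMulVec u v).det ≠ 0) :
    bdet M (u + a • s) r * (M - vecMulVec u v).det
      - bdet M u r * (M - vecMulVec (u + a • s) v).det
      = a * (bdet (M - vecMulVec u v) s r * M.det) := by
  have hd := det_rank_one M hM u v
  rw [bdet_unit _ hM2, bdet_unit _ hM, bdet_unit _ hM, det_rank_one M hM]
  set y := (M - vecMulVec u v)⁻¹ *ᵥ s with hy
  have h1 : (M - vecMulVec u v) *ᵥ y = s := by
    rw [hy, mulVec_mulVec, Matrix.mul_nonsing_inv _ (isUnit_iff_ne_zero.2 hM2), one_mulVec]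
  have h2 : M *ᵥ y = s + (v ⬝ᵥ y) • u := by
    rw [← h1, Matrix.sub_mulVec]
    ext i; simp [Matrix.vecMulVec_mulVec, mul_comm]
  have h3 : y = M⁻¹ *ᵥ s + (v ⬝ᵥ y) • (M⁻¹ *ᵥ u) := by
    rw [← mulVec_smul, ← mulVec_add, ← h2, mulVec_mulVec,
      Matrix.nonsing_inv_mul _ (isUnit_iff_ne_zero.2 hM), one_mulVec]
  have h4 : v ⬝ᵥ y = v ⬝ᵥ (M⁻¹ *ᵥ s) + (v ⬝ᵥ y) * (v ⬝ᵥ (M⁻¹ *ᵥ u)) := by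
    conv_lhs => rw [h3]
    simp [dotProduct_add, dotProduct_smul]
  have h5 : r ⬝ᵥ y = r ⬝ᵥ (M⁻¹ *ᵥ s) + (v ⬝ᵥ y) * (r ⬝ᵥ (M⁻¹ *ᵥ u)) := by
    conv_lhs => rw [h3]
    simp [dotProduct_add, dotProduct_smul]
  rw [h5, det_rank_one M hM]
  simp only [mulVec_add, mulVec_smul, dotProduct_add, dotProduct_smul, smul_eq_mul]
  linear_combination (a * M.det ^ 2 * (r ⬝ᵥ (M⁻¹ *ᵥ u))) * h4

lemma core (M : Matrix ι ι ℂ) (u s v r : ι → ℂ) (a : ℂ) :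
    bdet M (u + a • s) r * (M - vecMulVec u v).det
      - bdet M u r * (M - vecMulVec (u + a • s) v).det
      = a * (bdet (M - vecMulVec u v) s r * M.det) := by
  have hc : ∀ (K : Matrix ι ι ℂ), Continuous fun t : ℂ => (K + scalar ι t) := by
    intro K
    refine continuous_const.add ?_
    refine continuous_matrix fun i j => ?_
    by_cases h : i = j
    · subst h; simpa using continuous_id'
    · simpa [h] using continuous_const
  have hb : ∀ (K : ℂ → Matrix ι ι ℂ) (c : ι → ℂ), Continuous K →
      Continuous fun t => bdet (K t) c r := by
    intro K c hK
    unfold bdet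
    exact (hK.matrix_fromBlocks continuous_const continuous_const continuous_const).matrix_det
  have hfin : ∀ K : Matrix ι ι ℂ, {t : ℂ | (K + scalar ι t).det = 0}.Finite := by
    intro K
    refine ((-K).charpoly.roots.toFinset.finite_toSet).subset ?_
    intro t ht
    have : (-K).charpoly ≠ 0 := (Matrix.charpoly_monic _).ne_zero
    simp only [Set.mem_ofPred_eq] at ht
    simp [this, Polynomial.IsRoot, Matrix.eval_charpoly, add_comm, -scalar_apply, ht]
  have hdense : Dense (({t : ℂ | (M + scalar ι t).det = 0} ∪
      {t : ℂ | (M - vecMulVec u v + scalar ι t).det = 0})ᶜ) :=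
    ((hfin _).union (hfin _)).countable.dense_compl ℂ
  have key := Continuous.ext_on (f := fun t : ℂ =>
      bdet (M + scalar ι t) (u + a • s) r * (M + scalar ι t - vecMulVec u v).det
      - bdet (M + scalar ι t) u r * (M + scalar ι t - vecMulVec (u + a • s) v).det)
      (g := fun t : ℂ => a * (bdet (M + scalar ι t - vecMulVec u v) s r * (M + scalar ι t).det))
      hdense ?_ ?_ ?_
  · have := congrFun key 0
    simpa only [map_zero, add_zero] using this
  · have h0 := hc M
    exact ((hb _ _ h0).mul (h0.sub continuous_const).matrix_det).sub
      ((hb _ _ h0).mul (h0.sub continuous_const).matrix_det)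
  · have h0 := hc M
    exact continuous_const.mul ((hb _ _ (h0.sub continuous_const)).mul h0.matrix_det)
  · intro t ht
    simp only [Set.mem_compl_iff, Set.mem_union, Set.mem_ofPred_eq, not_or] at ht
    refine core_generic _ _ _ _ _ _ ht.1 ?_
    rw [add_sub_right_comm]
    exact ht.2

end helpers

/-- Discrete bilinear equation in the `k₁` direction for the Gram-type tau functions
of the two-component KP–Toda hierarchy. -/
theorem discrete_bilinear_k1 (N : ℕ) (hN : 1 ≤ N)
    (p pb q qb : Fin N → ℂ)
    (hp : ∀ i, p i ≠ 0) (hpb : ∀ i, pb i ≠ 0) (hq : ∀ i, q i ≠ 0) (hqb : ∀ i, qb i ≠ 0)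
    (hppb : ∀ i j, p i + pb j ≠ 0) (hqqb : ∀ i j, q i + qb j ≠ 0)
    (μ ν : ℂ) (ξ0 ξb0 η0 ηb0 : Fin N → ℂ)
    (a₁ a₂ : ℝ) (ha₁ : a₁ ≠ 0) (ha₂ : a₂ ≠ 0)
    (h1 : ∀ i, 1 - (a₁ : ℂ) * p i ≠ 0) (h2 : ∀ j, 1 + (a₁ : ℂ) * pb j ≠ 0)
    (h3 : ∀ i, 1 - (a₂ : ℂ) * q i ≠ 0) (h4 : ∀ j, 1 + (a₂ : ℂ) * qb j ≠ 0)
    (x y : ℝ)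
    (ξ ξb η ηb : Fin N → ℂ)
    (hξ : ∀ i, ξ i = (x : ℂ) / p i + ξ0 i)
    (hξb : ∀ j, ξb j = (x : ℂ) / pb j + ξb0 j)
    (hη : ∀ i, η i = (y : ℂ) / q i + η0 i)
    (hηb : ∀ j, ηb j = (y : ℂ) / qb j + ηb0 j)
    (A : ℤ → ℤ → Matrix (Fin N) (Fin N) ℂ)
    (hA : ∀ n k₁ i j, A n k₁ i j =
      (μ * pb j / (p i + pb j)) * (-(p i) / pb j) ^ n *
      ((1 - (a₁ : ℂ) * p i) / (1 + (a₁ : ℂ) * pb j)) ^ (-k₁) *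
      Complex.exp (ξ i + ξb j))
    (B : ℤ → ℤ → Matrix (Fin N) (Fin N) ℂ)
    (hB : ∀ m k₂ i j, B m k₂ i j =
      (ν / (q i + qb j)) * (-(q i) / qb j) ^ m *
      ((1 - (a₂ : ℂ) * q i) / (1 + (a₂ : ℂ) * qb j)) ^ (-k₂) *
      Complex.exp (η i + ηb j))
    (Φ : ℤ → ℤ → Fin N → ℂ)
    (hΦ : ∀ n k₁ j, Φ n k₁ j =
      p j ^ n * (1 - (a₁ : ℂ) * p j) ^ (-k₁) * Complex.exp (ξ j))
    (Ψb : ℤ → ℤ → Fin N → ℂ)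
    (hΨb : ∀ m k₂ j, Ψb m k₂ j =
      (-(qb j)) ^ (-m) * (1 + (a₂ : ℂ) * qb j) ^ k₂ * Complex.exp (ηb j))
    (f : ℤ → ℤ → ℤ → ℤ → ℂ)
    (hf : ∀ m k₂ n k₁, f m k₂ n k₁ = blockDet (A n k₁) (B m k₂))
    (g : ℤ → ℤ → ℤ → ℤ → ℂ)
    (hg : ∀ m k₂ n k₁, g m k₂ n k₁ = borderedDet (A n k₁) (B m k₂)
      (Sum.elim (Φ n k₁) (fun _ => 0))
      (Sum.elim (fun _ => 0) (fun j => -(Ψb m k₂ j)))) :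
    ∀ n k₁ m k₂ : ℤ,
      (1 / (a₁ : ℂ)) * (g (m + 1) k₂ n (k₁ + 1) * f m k₂ (n + 1) k₁
        - g (m + 1) k₂ n k₁ * f m k₂ (n + 1) (k₁ + 1))
      = g (m + 1) k₂ (n + 1) (k₁ + 1) * f m k₂ n k₁ := by
  intro n k₁ m k₂
  have ha : (a₁ : ℂ) ≠ 0 := by exact_mod_cast ha₁
  -- vectors
  set Z : Fin N → ℂ := fun _ => 0 with hZ
  obtain ⟨v, hv⟩ : ∃ v : Fin N → ℂ, v = fun j => (-(pb j)) ^ (-n) *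
    (1 + (a₁ : ℂ) * pb j) ^ k₁ * Complex.exp (ξb j) := ⟨_, rfl⟩
  obtain ⟨e, he⟩ : ∃ e : Fin N → ℂ, e = fun i => q i ^ m *
    (1 - (a₂ : ℂ) * q i) ^ (-k₂) * Complex.exp (η i) := ⟨_, rfl⟩
  have hpow : ∀ i j (t : ℤ), (-(p i) / pb j) ^ t = p i ^ t * (-(pb j)) ^ (-t) := by
    intro i j t
    rw [neg_div, ← div_neg, div_zpow, _root_.zpow_neg, div_eq_mul_inv]
  have hpowq : ∀ i j (t : ℤ), (-(q i) / qb j) ^ t = q i ^ t * (-(qb j)) ^ (-t) := by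
    intro i j t
    rw [neg_div, ← div_neg, div_zpow, _root_.zpow_neg, div_eq_mul_inv]
  have hA' : ∀ n k i j, A n k i j = (μ * pb j / (p i + pb j)) * (Φ n k i *
      ((-(pb j)) ^ (-n) * (1 + (a₁ : ℂ) * pb j) ^ k * Complex.exp (ξb j))) := by
    intro n k i j
    rw [hA, hΦ, hpow, Complex.exp_add, div_zpow, _root_.zpow_neg (1 + (a₁ : ℂ) * pb j), div_inv_eq_mul]
    ring
  have hBs : B (m + 1) k₂ = B m k₂ + vecMulVec (-(ν • e)) (fun j => -(Ψb (m + 1) k₂ j)) := by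
    ext i j
    have := hqqb i j
    have := hqb j
    have := hq i
    have hn : -(qb j) ≠ 0 := neg_ne_zero.2 (hqb j)
    simp only [Matrix.add_apply, vecMulVec_apply, Pi.neg_apply, Pi.smul_apply, smul_eq_mul, he]
    rw [hB, hB, hΨb, hpowq, hpowq, Complex.exp_add, div_zpow, _root_.zpow_neg (1 + (a₂ : ℂ) * qb j),
      div_inv_eq_mul, zpow_add_one₀ (hq i), neg_add, zpow_add₀ hn, _root_.zpow_neg_one]
    field_simp
    ring
  have hw : Φ n (k₁ + 1) = Φ n k₁ + (a₁ : ℂ) • Φ (n + 1) (k₁ + 1) := by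
    ext i
    have := h1 i
    have h1' : 1 - p i * (a₁ : ℂ) ≠ 0 := by rw [mul_comm]; exact h1 i
    simp only [Pi.add_apply, Pi.smul_apply, smul_eq_mul]
    rw [hΦ, hΦ, hΦ, zpow_add_one₀ (hp i), neg_add, zpow_add₀ (h1 i), _root_.zpow_neg_one]
    field_simp
    ring
  have hn1 : A (n + 1) k₁ = A n k₁ - vecMulVec (Φ n k₁) (μ • v) := by
    ext i j
    have := hppb i j
    have := hpb j
    have hn : -(pb j) ≠ 0 := neg_ne_zero.2 (hpb j)
    simp only [Matrix.sub_apply, vecMulVec_apply, Pi.smul_apply, smul_eq_mul, hv]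
    rw [hA', hA', hΦ, hΦ, zpow_add_one₀ (hp i), neg_add, zpow_add₀ hn, _root_.zpow_neg_one]
    field_simp
    ring
  have hk1 : A n (k₁ + 1) = A n k₁ + vecMulVec (Φ n (k₁ + 1))
      (fun j => (a₁ : ℂ) * μ * pb j * v j) := by
    ext i j
    have := hppb i j
    have := hpb j
    have := h1 i
    have h1' : 1 - p i * (a₁ : ℂ) ≠ 0 := by rw [mul_comm]; exact h1 i
    simp only [Matrix.add_apply, vecMulVec_apply, hv]
    rw [hA', hA', hΦ, hΦ, zpow_add_one₀ (h2 j), neg_add, zpow_add₀ (h1 i), _root_.zpow_neg_one]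
    generalize (1 - (a₁ : ℂ) * p i) ^ (-k₁) = P
    generalize (1 + (a₁ : ℂ) * pb j) ^ k₁ = Q
    generalize (-(pb j)) ^ (-n) = R
    generalize p i ^ n = S
    field_simp
    ring
  have hnk : A (n + 1) (k₁ + 1) = A n k₁ - vecMulVec (Φ n (k₁ + 1)) (μ • v) := by
    ext i j
    have := hppb i j
    have := hpb j
    have := h1 i
    have h1' : 1 - p i * (a₁ : ℂ) ≠ 0 := by rw [mul_comm]; exact h1 i
    have hn : -(pb j) ≠ 0 := neg_ne_zero.2 (hpb j)
    simp only [Matrix.sub_apply, vecMulVec_apply, Pi.smul_apply, smul_eq_mul, hv]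
    rw [hA', hA', hΦ, hΦ, hΦ, zpow_add_one₀ (hp i), zpow_add_one₀ (h2 j), neg_add,
      zpow_add₀ (h1 i), _root_.zpow_neg_one, neg_add, zpow_add₀ hn, _root_.zpow_neg_one]
    generalize (1 - (a₁ : ℂ) * p i) ^ (-k₁) = P
    generalize (1 + (a₁ : ℂ) * pb j) ^ k₁ = Q
    generalize (-(pb j)) ^ (-n) = R
    generalize p i ^ n = S
    field_simp
    ring
  obtain ⟨K, hK⟩ : ∃ K : Matrix (Fin N) (Fin N) ℂ → Matrix (Fin N ⊕ Fin N) (Fin N ⊕ Fin N) ℂ,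
    K = fun C => Matrix.fromBlocks C 1 (-1) (B m k₂) := ⟨_, rfl⟩
  set r : Fin N ⊕ Fin N → ℂ := Sum.elim Z (fun j => -(Ψb (m + 1) k₂ j)) with hr
  have hKadd : ∀ C c d, K (C + vecMulVec c d) = K C + vecMulVec (Sum.elim c Z) (Sum.elim d Z) := by
    intro C c d
    rw [hK]
    ext (i | i) (j | j) <;> simp [vecMulVec_apply, hZ]
  have hKsub : ∀ C c d, K (C - vecMulVec c d) = K C - vecMulVec (Sum.elim c Z) (Sum.elim d Z) := by
    intro C c d
    rw [hK]
    ext (i | i) (j | j) <;> simp [vecMulVec_apply, hZ]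
  have hgK : ∀ n' k', g (m + 1) k₂ n' k' = bdet (K (A n' k')) (Sum.elim (Φ n' k') Z) r := by
    intro n' k'
    rw [hg, ← bdet_row (K (A n' k')) _ r (Sum.elim Z (-(ν • e)))]
    unfold borderedDet bdet
    have : Matrix.fromBlocks (A n' k') 1 (-1) (B (m + 1) k₂)
        = K (A n' k') + vecMulVec (Sum.elim Z (-(ν • e))) r := by
      rw [hK, hBs]
      ext (i | i) (j | j) <;> simp [vecMulVec_apply, hZ, hr, mul_assoc]
    rw [this]
  have hfK : ∀ n' k', f m k₂ n' k' = (K (A n' k')).det := by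
    intro n' k'
    rw [hf, hK]; rfl
  have hwS : Sum.elim (Φ n (k₁ + 1)) Z
      = Sum.elim (Φ n k₁) Z + (a₁ : ℂ) • Sum.elim (Φ (n + 1) (k₁ + 1)) Z := by
    rw [hw]
    ext (i | i) <;> simp [hZ]
  have hc := core (K (A n k₁)) (Sum.elim (Φ n k₁) Z) (Sum.elim (Φ (n + 1) (k₁ + 1)) Z)
    (Sum.elim (μ • v) Z) r (a₁ : ℂ)
  rw [← hwS] at hc
  have hs : bdet (K (A (n + 1) (k₁ + 1))) (Sum.elim (Φ (n + 1) (k₁ + 1)) Z) r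
      = bdet (K (A n k₁) - vecMulVec (Sum.elim (Φ n k₁) Z) (Sum.elim (μ • v) Z))
        (Sum.elim (Φ (n + 1) (k₁ + 1)) Z) r := by
    rw [← bdet_col (K (A n k₁) - vecMulVec (Sum.elim (Φ n k₁) Z) (Sum.elim (μ • v) Z)) _ r
      (-(a₁ : ℂ) • Sum.elim (μ • v) Z), hnk, hKsub, hwS]
    congr 1
    ext i j
    simp only [Matrix.sub_apply, Matrix.add_apply, vecMulVec_apply, Pi.add_apply, Pi.smul_apply,
      smul_eq_mul]
    ring
  rw [hgK, hgK, hgK, hfK, hfK, hfK, hs, hk1, hKadd, bdet_col, hn1, hKsub, hnk, hKsub, hc]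
  field_simp
end
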